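/- arXiv:1112.0161 — 2 statements merged into one kernel-verified Lean document; each statement's English description precedes it below -/
import Mathlib

section
/- Let Φ = (φ_1,...,φ_M) be a finite family of vectors in a vector space V with fundamental partition {F_1,...,F_ℓ}. Fix t < ℓ and choose any vector φ_k ∈ F_k where t < k. Then {F_1,...,F_t} contains a t-transversal T = {S_1,...,S_t} (with S_i ⊆ F_i and span(S_i) = span(S_j) for all i,j ≤ t) such that φ_k ∈ span(S_i) for all i ∈ {1,...,t}. -/
/-- The sequence of part sizes of a partition `F : Fin ℓ → Finset (Fin M)`,
padded with zeros. -/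
def PartSizes {M ℓ : ℕ} (F : Fin ℓ → Finset (Fin M)) : ℕ → ℕ :=
  fun n => if h : n < ℓ then (F ⟨n, h⟩).card else 0

/-- Lexicographic order on sequences of naturals: `a ≤ₗₑₓ b`. -/
def LexLE (a b : ℕ → ℕ) : Prop :=
  a = b ∨ ∃ n, (∀ m < n, a m = b m) ∧ a n < b n

/-- `F : Fin ℓ → Finset (Fin M)` is an ordered partition of the index set `Ω`
into sets indexing linearly independent subfamilies of `φ`: the parts are
nonempty, pairwise disjoint, cover `Ω`, each part indexes a linearly
independent subfamily, and the part sizes are non-increasing. -/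
def IsOrderedLIPartitionOn (K : Type*) {V : Type*} [Field K] [AddCommGroup V] [Module K V]
    {M ℓ : ℕ} (φ : Fin M → V) (Ω : Finset (Fin M)) (F : Fin ℓ → Finset (Fin M)) : Prop :=
  (∀ i, (F i).Nonempty) ∧
  (∀ i j, i ≠ j → Disjoint (F i) (F j)) ∧
  (Finset.univ.biUnion F = Ω) ∧
  (∀ i, LinearIndependent K (fun x : {y : Fin M // y ∈ F i} => φ x.1)) ∧
  (∀ i j : Fin ℓ, i ≤ j → (F j).card ≤ (F i).card)

/-- A fundamental partition of the subfamily of `φ` indexed by `Ω`: an ordered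
partition into linearly independent sets whose size sequence is
lexicographically maximal among all such ordered partitions. -/
def IsFundamentalOn (K : Type*) {V : Type*} [Field K] [AddCommGroup V] [Module K V]
    {M ℓ : ℕ} (φ : Fin M → V) (Ω : Finset (Fin M)) (F : Fin ℓ → Finset (Fin M)) : Prop :=
  IsOrderedLIPartitionOn K φ Ω F ∧
  ∀ (k : ℕ) (P : Fin k → Finset (Fin M)),
    IsOrderedLIPartitionOn K φ Ω P → LexLE (PartSizes P) (PartSizes F)

open Submodule in
lemma exch_step {K V α : Type*} [Field K] [AddCommGroup V] [Module K V] [DecidableEq α]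
    (φ : α → V) (I : Finset α) (hI : LinearIndepOn K φ (I : Set α)) (m : α) (hm : m ∉ I)
    (B C : Set α) (h1 : φ m ∈ span K (φ '' (↑I ∩ B))) (h2 : φ m ∉ span K (φ '' (↑I ∩ C))) :
    ∃ y ∈ I, y ∈ B ∧ y ∉ C ∧ LinearIndepOn K φ (insert m (I.erase y) : Finset α) ∧
      ∀ D : Set α, B ⊆ D → m ∈ D →
        span K (φ '' (↑(insert m (I.erase y)) ∩ D)) = span K (φ '' (↑I ∩ D)) := by
  classical
  -- minimal spanning subset
  have hex : ∃ A : Finset α, (↑A ⊆ (↑I ∩ B : Set α) ∧ φ m ∈ span K (φ '' (A : Set α))) := by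
    refine ⟨I.filter (· ∈ B), ?_, ?_⟩
    · intro x hx; simpa using hx
    · convert h1 using 3
      ext x; simp
  obtain ⟨A, ⟨hA, hmA⟩, hmin⟩ := exists_minimal_of_wellFoundedLT
    (fun A : Finset α => (↑A ⊆ (↑I ∩ B : Set α) ∧ φ m ∈ span K (φ '' (A : Set α)))) hex
  have hAC : ∃ y ∈ A, y ∉ C := by
    by_contra hcon
    push Not at hcon
    exact h2 (span_mono (Set.image_mono (show (A : Set α) ⊆ ↑I ∩ C from fun x hx => ⟨(hA hx).1, hcon x hx⟩)) hmA)
  obtain ⟨y, hyA, hyC⟩ := hAC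
  have hyI : y ∈ I := (hA hyA).1
  have hmy : φ m ∉ span K (φ '' (A.erase y : Finset α)) := by
    intro hc
    have := hmin (y := A.erase y)
      ⟨fun x hx => hA (Finset.mem_of_mem_erase hx), hc⟩ (Finset.erase_subset _ _)
    exact Finset.notMem_erase y A (this hyA)
  have hyspan : φ y ∈ span K (insert (φ m) (φ '' (A.erase y : Finset α))) := by
    apply mem_span_insert_exchange _ hmy
    rw [← Set.image_insert_eq, ← Finset.coe_insert, Finset.insert_erase hyA]
    exact hmA
  refine ⟨y, hyI, (hA hyA).2, hyC, ?_, ?_⟩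
  · have hI' := hI
    rw [← Finset.insert_erase hyI, Finset.coe_insert,
      linearIndepOn_insert (by simp)] at hI'
    rw [Finset.coe_insert, linearIndepOn_insert (by simp [hm])]
    refine ⟨hI'.1, fun hc => hI'.2 ?_⟩
    refine (span_le.2 ?_) hyspan
    rintro v (rfl | ⟨x, hx, rfl⟩)
    · exact hc
    · refine subset_span ⟨x, ?_, rfl⟩
      have hx' := Finset.mem_erase.1 hx
      exact Finset.mem_erase.2 ⟨hx'.1, (hA hx'.2).1⟩
  · intro D hBD hmD
    apply le_antisymm
    · rw [span_le]
      rintro _ ⟨x, ⟨hx, hxD⟩, rfl⟩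
      rcases Finset.mem_insert.1 hx with rfl | hx
      · exact span_mono (Set.image_mono (show (A : Set α) ⊆ ↑I ∩ D from fun z hz => ⟨(hA hz).1, hBD (hA hz).2⟩)) hmA
      · exact subset_span ⟨x, ⟨Finset.mem_of_mem_erase hx, hxD⟩, rfl⟩
    · rw [span_le]
      rintro _ ⟨x, ⟨hx, hxD⟩, rfl⟩
      by_cases hxy : x = y
      · subst hxy
        refine (span_mono ?_) hyspan
        rintro v (rfl | ⟨z, hz, rfl⟩)
        · exact ⟨m, ⟨by simp, hmD⟩, rfl⟩
        · have hz' := Finset.mem_erase.1 hz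
          refine ⟨z, ⟨?_, hBD (hA hz'.2).2⟩, rfl⟩
          exact Finset.mem_insert_of_mem (Finset.mem_erase.2 ⟨hz'.1, (hA hz'.2).1⟩)
      · exact subset_span ⟨x, ⟨Finset.mem_insert_of_mem (Finset.mem_erase.2 ⟨hxy, hx⟩), hxD⟩, rfl⟩

/-- Decreasing sequence of index sets approximating the transversal from above. -/
def levelSet (K : Type*) {V α ι : Type*} [Field K] [AddCommGroup V] [Module K V]
    (φ : α → V) (F : ι → Finset α) : ℕ → Set α
  | 0 => Set.univ
  | j + 1 => {x | ∀ i, φ x ∈ Submodule.span K (φ '' (↑(F i) ∩ levelSet K φ F j))}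

lemma levelSet_anti (K : Type*) {V α ι : Type*} [Field K] [AddCommGroup V] [Module K V]
    (φ : α → V) (F : ι → Finset α) : Antitone (levelSet K φ F) := by
  apply antitone_nat_of_succ_le
  intro j
  induction j with
  | zero => exact Set.subset_univ _
  | succ j ih =>
    intro x hx i
    exact Submodule.span_mono (Set.image_mono (Set.inter_subset_inter_right _ ih)) (hx i)

open Submodule in
lemma augment {K V α ι : Type*} [Field K] [AddCommGroup V] [Module K V] [DecidableEq α]
    [DecidableEq ι] (φ : α → V) : ∀ (j : ℕ) (F : ι → Finset α) (m : α),
    (∀ i, LinearIndepOn K φ (F i : Set α)) → (∀ i i', i ≠ i' → Disjoint (F i) (F i')) →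
    (∀ i, m ∉ F i) → m ∉ levelSet K φ F j →
    ∃ F' : ι → Finset α, (∀ i, LinearIndepOn K φ (F' i : Set α)) ∧
      (∀ i i', i ≠ i' → Disjoint (F' i) (F' i')) ∧
      (∀ x, (∃ i, x ∈ F' i) ↔ x = m ∨ ∃ i, x ∈ F i) ∧
      (∀ i, (F i).card ≤ (F' i).card) ∧ ∃ i, (F i).card < (F' i).card := by
  intro j
  induction j with
  | zero => intro F m _ _ _ h; exact absurd (Set.mem_univ _) h
  | succ j ih =>
    intro F m hLI hD hmF hm
    by_cases hmj : m ∈ levelSet K φ F j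
    swap
    · exact ih F m hLI hD hmF hmj
    have hm2 : ∃ i, φ m ∉ span K (φ '' (↑(F i) ∩ levelSet K φ F j)) := by
      by_contra hc
      push Not at hc
      exact hm hc
    obtain ⟨i, hi⟩ := hm2
    rcases j with _ | j
    · refine ⟨Function.update F i (insert m (F i)), ?_, ?_, ?_, ?_, i, ?_⟩
      · intro i'
        by_cases h : i' = i
        · subst h
          simp only [Function.update_self, Finset.coe_insert]
          rw [linearIndepOn_insert (by simpa using hmF i')]
          refine ⟨hLI i', ?_⟩
          simpa [levelSet] using hi
        · simpa [h] using hLI i'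
      · intro a b hab
        simp only [Function.update_apply]
        have := hD a b hab
        have := hmF a
        have := hmF b
        split_ifs <;> simp_all
      · intro x
        simp only [Function.update_apply]
        constructor
        · rintro ⟨a, ha⟩
          split_ifs at ha
          · rcases Finset.mem_insert.1 ha with h | h
            · exact Or.inl h
            · exact Or.inr ⟨_, h⟩
          · exact Or.inr ⟨_, ha⟩
        · rintro (rfl | ⟨a, ha⟩)
          · exact ⟨i, by simp⟩
          · refine ⟨a, ?_⟩
            split_ifs with h
            · subst h; simp [ha]
            · exact ha
      · intro a
        by_cases h : a = i
        · subst h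
          simp [hmF a]
        · simp [h]
      · simp [hmF i]
    · obtain ⟨y, hyI, hyB, hyC, hLI', hspan⟩ :=
        exch_step φ (F i) (hLI i) m (hmF i) (levelSet K φ F j) (levelSet K φ F (j+1)) (hmj i) hi
      have hym : y ≠ m := fun h => hmF i (h ▸ hyI)
      set G := Function.update F i (insert m ((F i).erase y)) with hG
      have hlev : ∀ a ≤ j + 1, levelSet K φ G a = levelSet K φ F a := by
        intro a
        induction a with
        | zero => intro _; rfl
        | succ a iha =>
          intro ha
          ext x
          simp only [levelSet, Set.mem_ofPred_eq]
          rw [iha (by omega)]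
          refine forall_congr' fun b => ?_
          by_cases h : b = i
          · subst h
            simp only [hG, Function.update_self]
            rw [hspan _ (levelSet_anti K φ F (by omega)) (levelSet_anti K φ F (by omega) hmj)]
          · simp [hG, h]
      have hGmem : ∀ a x, x ∈ G a ↔ (x ∈ F a ∧ x ≠ y) ∨ (a = i ∧ x = m) := by
        intro a x
        by_cases h : a = i
        · subst h
          simp only [hG, Function.update_self, Finset.mem_insert, Finset.mem_erase]
          tauto
        · simp only [hG, Function.update_of_ne h, h, false_and, or_false]
          constructor
          · intro hx
            refine ⟨hx, ?_⟩
            rintro rfl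
            exact Finset.disjoint_left.1 (hD a i h) hx hyI
          · exact fun hx => hx.1
      have hcard : ∀ a, (G a).card = (F a).card := by
        intro a
        by_cases h : a = i
        · subst h
          simp only [hG, Function.update_self]
          rw [Finset.card_insert_of_notMem (by simp [hmF a]), Finset.card_erase_add_one hyI]
        · simp [hG, h]
      have hih := ih G y ?_ ?_ ?_ (by rw [hlev _ le_rfl]; exact hyC)
      · obtain ⟨F', h1, h2, h3, h4, h5⟩ := hih
        refine ⟨F', h1, h2, ?_, ?_, ?_⟩
        · intro x
          rw [h3]
          simp only [hGmem]
          constructor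
          · rintro (rfl | ⟨a, h | h⟩)
            · exact Or.inr ⟨i, hyI⟩
            · exact Or.inr ⟨a, h.1⟩
            · exact Or.inl h.2
          · rintro (rfl | ⟨a, h⟩)
            · exact Or.inr ⟨i, Or.inr ⟨rfl, rfl⟩⟩
            · by_cases hxy : x = y
              · exact Or.inl hxy
              · exact Or.inr ⟨a, Or.inl ⟨h, hxy⟩⟩
        · simpa only [hcard] using h4
        · simpa only [hcard] using h5
      · intro a
        by_cases h : a = i
        · subst h; simpa only [hG, Function.update_self] using hLI'
        · simpa only [hG, Function.update_of_ne h] using hLI a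
      · intro a b hab
        rw [Finset.disjoint_left]
        intro x hxa hxb
        rw [hGmem] at hxa hxb
        rcases hxa with hxa | hxa <;> rcases hxb with hxb | hxb
        · exact Finset.disjoint_left.1 (hD a b hab) hxa.1 hxb.1
        · exact hmF a (hxb.2 ▸ hxa.1)
        · exact hmF b (hxa.2 ▸ hxb.1)
        · exact hab (hxa.1.trans hxb.1.symm)
      · intro a ha
        rw [hGmem] at ha
        rcases ha with h | h
        · exact h.2 rfl
        · exact hym h.2

/-- An unordered, possibly degenerate, partition can be sorted. -/
lemma sort_partition {K V : Type*} [Field K] [AddCommGroup V] [Module K V] {M ℓ : ℕ}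
    (φ : Fin M → V) (G : Fin ℓ → Finset (Fin M))
    (hD : ∀ i j, i ≠ j → Disjoint (G i) (G j)) (hU : ∀ x, ∃ i, x ∈ G i)
    (hLI : ∀ i, LinearIndepOn K φ (G i : Set (Fin M))) :
    ∃ (n : ℕ) (P : Fin n → Finset (Fin M)) (σ : Equiv.Perm (Fin ℓ)),
      IsOrderedLIPartitionOn K φ Finset.univ P ∧
      (Antitone fun i => (G (σ i)).card) ∧
      ∀ i : Fin ℓ, PartSizes P i = (G (σ i)).card := by
  classical
  let f : Fin ℓ → ℕᵒᵈ := fun i => OrderDual.toDual (G i).card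
  let σ := Tuple.sort f
  have hanti : Antitone fun i => (G (σ i)).card := fun a b hab => Tuple.monotone_sort f hab
  have hex : ∃ n, ∀ i : Fin ℓ, n ≤ (i : ℕ) → (G (σ i)).card = 0 :=
    ⟨ℓ, fun i hi => absurd i.2 (by omega)⟩
  let n := Nat.find hex
  have hn : ∀ i : Fin ℓ, n ≤ (i : ℕ) → (G (σ i)).card = 0 := Nat.find_spec hex
  have hnl : n ≤ ℓ := Nat.find_min' hex (fun i hi => absurd i.2 (by omega))
  have hpos : ∀ i : Fin ℓ, (i : ℕ) < n → 0 < (G (σ i)).card := by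
    intro i hi
    have := Nat.find_min hex hi
    push Not at this
    obtain ⟨i', h1, h2⟩ := this
    have h3 : (G (σ i')).card ≤ (G (σ i)).card := hanti (show i ≤ i' from h1)
    omega
  refine ⟨n, fun i => G (σ (Fin.castLE hnl i)), σ, ⟨?_, ?_, ?_, ?_, ?_⟩, hanti, ?_⟩
  · intro i
    exact Finset.card_pos.1 (hpos _ i.2)
  · intro i j hij
    apply hD
    intro h
    apply hij
    exact Fin.castLE_injective hnl (σ.injective h)
  · ext x
    simp only [Finset.mem_biUnion, Finset.mem_univ, true_and, iff_true]
    obtain ⟨i, hi⟩ := hU x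
    have hlt : ((σ.symm i : Fin ℓ) : ℕ) < n := by
      by_contra hc
      have := hn (σ.symm i) (by omega)
      simp only [Equiv.apply_symm_apply, Finset.card_eq_zero] at this
      simp [this] at hi
    refine ⟨⟨_, hlt⟩, ?_⟩
    have : Fin.castLE hnl ⟨_, hlt⟩ = σ.symm i := rfl
    rw [this]
    simpa using hi
  · intro i
    exact hLI _
  · intro i j hij
    exact hanti (show Fin.castLE hnl i ≤ Fin.castLE hnl j from hij)
  · intro i
    unfold PartSizes
    split_ifs with h
    · rfl
    · exact (hn i (by omega)).symm

lemma top_sum {ℓ : ℕ} (b : Fin ℓ → ℕ) (σ : Equiv.Perm (Fin ℓ))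
    (h : Antitone fun i => b (σ i)) (s : ℕ) :
    ∑ i : Fin ℓ, (if (i : ℕ) < s then b i else 0) ≤
      ∑ i : Fin ℓ, (if (i : ℕ) < s then b (σ i) else 0) := by
  have hg : Antitone fun i : Fin ℓ => if (i : ℕ) < s then (1 : ℕ) else 0 := by
    intro i j hij
    have : (i : ℕ) ≤ j := hij
    dsimp only
    split_ifs <;> omega
  have := (h.monovary hg).sum_comp_perm_mul_le_sum_mul (σ := σ⁻¹)
  simpa using this

lemma lex_contra {M ℓ n t : ℕ} (F : Fin ℓ → Finset (Fin M)) (P : Fin n → Finset (Fin M))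
    (b : Fin ℓ → ℕ) (σ : Equiv.Perm (Fin ℓ)) (h : Antitone fun i => b (σ i))
    (hP : ∀ i : Fin ℓ, PartSizes P i = b (σ i))
    (hle : ∀ i : Fin ℓ, (i : ℕ) < t → (F i).card ≤ b i)
    (hlt : ∃ i : Fin ℓ, (i : ℕ) < t ∧ (F i).card < b i)
    (hlex : LexLE (PartSizes P) (PartSizes F)) : False := by
  have hF : ∀ i : Fin ℓ, PartSizes F i = (F i).card := by
    intro i; simp [PartSizes]
  -- if the first `t` sizes are dominated we get a contradiction
  have key : (∀ i : Fin ℓ, (i : ℕ) < t → PartSizes P i ≤ PartSizes F i) → False := by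
    intro hc
    have h1 := top_sum b σ h t
    have h2 : ∑ i : Fin ℓ, (if (i : ℕ) < t then b (σ i) else 0) ≤
        ∑ i : Fin ℓ, (if (i : ℕ) < t then (F i).card else 0) := by
      apply Finset.sum_le_sum
      intro i _
      split_ifs with hi
      · rw [← hP, ← hF]; exact hc i hi
      · exact le_rfl
    have h3 : ∑ i : Fin ℓ, (if (i : ℕ) < t then (F i).card else 0) <
        ∑ i : Fin ℓ, (if (i : ℕ) < t then b i else 0) := by
      apply Finset.sum_lt_sum
      · intro i _
        split_ifs with hi
        · exact hle i hi
        · exact le_rfl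
      · obtain ⟨i, hi, hi'⟩ := hlt
        exact ⟨i, Finset.mem_univ _, by simpa [hi] using hi'⟩
    omega
  rcases hlex with heq | ⟨q, hq, hq'⟩
  · exact key fun i _ => by rw [heq]
  · by_cases hqt : t ≤ q
    · exact key fun i hi => (hq i (by omega)).le
    have hql : q < ℓ := by
      by_contra hc
      have : PartSizes F q = 0 := by simp [PartSizes, hc]
      omega
    have h1 := top_sum b σ h (q + 1)
    have h2 : ∑ i : Fin ℓ, (if (i : ℕ) < q + 1 then b (σ i) else 0) <
        ∑ i : Fin ℓ, (if (i : ℕ) < q + 1 then (F i).card else 0) := by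
      apply Finset.sum_lt_sum
      · intro i _
        split_ifs with hi
        · rw [← hP, ← hF]
          rcases Nat.lt_succ_iff_lt_or_eq.1 hi with h | h
          · exact (hq i h).le
          · rw [h]; exact hq'.le
        · exact le_rfl
      · refine ⟨⟨q, hql⟩, Finset.mem_univ _, ?_⟩
        simp only [Nat.lt_succ_self, if_true]
        rw [← hP, ← hF]
        exact hq'
    have h3 : ∑ i : Fin ℓ, (if (i : ℕ) < q + 1 then (F i).card else 0) ≤
        ∑ i : Fin ℓ, (if (i : ℕ) < q + 1 then b i else 0) := by
      apply Finset.sum_le_sum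
      intro i _
      split_ifs with hi
      · exact hle i (by omega)
      · exact le_rfl
    omega


/-- Existence of transversals.  Let `{F_1,…,F_ℓ}` be a fundamental partition of
`Φ`, fix `t < ℓ`, and choose any `φ_m ∈ F_k` with `t < k` (0-based: `t ≤ k`).
Then `{F_1,…,F_t}` contains a `t`-transversal `T = {S_1,…,S_t}`, i.e.
`S_i ⊆ F_i` with all spans equal, such that `φ_m ∈ span(S_i)` for every `i`. -/
theorem exists_transversal {K V : Type*} [Field K] [AddCommGroup V] [Module K V]
    {M ℓ : ℕ} (φ : Fin M → V) (F : Fin ℓ → Finset (Fin M))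
    (hF : IsFundamentalOn K φ Finset.univ F)
    (t : ℕ) (ht : t < ℓ) (k : Fin ℓ) (htk : t ≤ (k : ℕ)) (m : Fin M) (hm : m ∈ F k) :
    ∃ S : Fin t → Finset (Fin M),
      (∀ i, S i ⊆ F (Fin.castLE ht.le i)) ∧
      (∀ i j, Submodule.span K (φ '' ↑(S i)) = Submodule.span K (φ '' ↑(S j))) ∧
      (∀ i, φ m ∈ Submodule.span K (φ '' ↑(S i))) := by
  classical
  obtain ⟨⟨hne, hD, hU, hLI, hcard⟩, hmax⟩ := hF
  have hLI' : ∀ i, LinearIndepOn K φ (F i : Set (Fin M)) := hLI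
  let F0 : Fin t → Finset (Fin M) := fun i => F (Fin.castLE ht.le i)
  have hDm : ∀ i, i ≠ k → m ∉ F i := fun i hi h => Finset.disjoint_left.1 (hD i k hi) h hm
  have hmem : ∀ j, m ∈ levelSet K φ F0 j := by
    intro j
    by_contra hcon
    obtain ⟨F', h1, h2, h3, h4, h5⟩ := augment φ j F0 m (fun i => hLI' _)
      (fun i i' h => hD _ _ (fun h' => h (Fin.castLE_injective _ h')))
      (fun i => hDm _ (fun h => by
        have := congrArg Fin.val h
        simp only [Fin.val_castLE] at this
        omega)) hcon
    let G : Fin ℓ → Finset (Fin M) := fun i =>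
      if h : (i : ℕ) < t then F' ⟨i, h⟩ else (F i).erase m
    have hGlt : ∀ (i : Fin ℓ) (h : (i : ℕ) < t), G i = F' ⟨i, h⟩ := fun i h => dif_pos h
    have hGge : ∀ (i : Fin ℓ) (h : ¬ (i : ℕ) < t), G i = (F i).erase m := fun i h => dif_neg h
    have hmix : ∀ a b : Fin ℓ, (a : ℕ) < t → ¬ (b : ℕ) < t → Disjoint (G a) (G b) := by
      intro a b ha hb
      rw [hGlt a ha, hGge b hb, Finset.disjoint_left]
      intro x hx hx'
      have hx' := Finset.mem_erase.1 hx'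
      rcases (h3 x).1 ⟨_, hx⟩ with h | ⟨i, hi⟩
      · exact hx'.1 h
      · refine Finset.disjoint_left.1 (hD _ b ?_) hi hx'.2
        intro h
        have := congrArg Fin.val h
        simp only [Fin.val_castLE] at this
        omega
    have hsp := sort_partition (K := K) φ G ?_ ?_ ?_
    · obtain ⟨n, P, σ, hP, hanti, hPs⟩ := hsp
      refine lex_contra (t := t) F P (fun i => (G i).card) σ hanti hPs ?_ ?_ (hmax n P hP)
      · intro i hi
        simp only [hGlt i hi]
        exact h4 ⟨i, hi⟩
      · obtain ⟨i, hi⟩ := h5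
        refine ⟨Fin.castLE ht.le i, i.2, ?_⟩
        simp only [hGlt (Fin.castLE ht.le i) i.2]
        exact hi
    · intro a b hab
      by_cases ha : (a : ℕ) < t <;> by_cases hb : (b : ℕ) < t
      · rw [hGlt a ha, hGlt b hb]
        apply h2
        intro h
        exact hab (Fin.ext (by simpa using h))
      · exact hmix a b ha hb
      · exact (hmix b a hb ha).symm
      · rw [hGge a ha, hGge b hb]
        exact (hD a b hab).mono (Finset.erase_subset _ _) (Finset.erase_subset _ _)
    · intro x
      have hx : x ∈ Finset.univ.biUnion F := by rw [hU]; exact Finset.mem_univ _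
      obtain ⟨i, -, hi⟩ := Finset.mem_biUnion.1 hx
      have aux : (x = m ∨ ∃ i, x ∈ F0 i) → ∃ i, x ∈ G i := by
        intro h
        obtain ⟨a, ha⟩ := (h3 x).2 h
        refine ⟨Fin.castLE ht.le a, ?_⟩
        rw [hGlt (Fin.castLE ht.le a) a.2]
        exact ha
      by_cases hit : (i : ℕ) < t
      · exact aux (Or.inr ⟨⟨i, hit⟩, hi⟩)
      · by_cases hxm : x = m
        · exact aux (Or.inl hxm)
        · exact ⟨i, by rw [hGge i hit]; exact Finset.mem_erase.2 ⟨hxm, hi⟩⟩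
    · intro i
      by_cases hi : (i : ℕ) < t
      · rw [hGlt i hi]; exact h1 _
      · rw [hGge i hi]
        exact (hLI' i).mono (by exact_mod_cast Finset.erase_subset _ _)
  -- stabilisation
  obtain ⟨n, hn⟩ := WellFoundedLT.antitone_chain_condition (levelSet_anti K φ F0)
  have hst : levelSet K φ F0 n = levelSet K φ F0 (n + 1) := hn (n + 1) (Nat.le_succ n)
  set R := levelSet K φ F0 n with hR
  have hRs : ∀ x ∈ R, ∀ i, φ x ∈ Submodule.span K (φ '' (↑(F0 i) ∩ R)) := by
    intro x hx
    rw [hst] at hx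
    exact hx
  have hS : ∀ i, (((F0 i).filter (· ∈ R) : Finset (Fin M)) : Set (Fin M)) = ↑(F0 i) ∩ R := by
    intro i; ext x; simp
  have hle : ∀ i j, Submodule.span K (φ '' (↑(F0 i) ∩ R)) ≤
      Submodule.span K (φ '' (↑(F0 j) ∩ R)) := by
    intro i j
    rw [Submodule.span_le]
    rintro _ ⟨x, hx, rfl⟩
    exact hRs x hx.2 j
  refine ⟨fun i => (F0 i).filter (· ∈ R), fun i => Finset.filter_subset _ _, ?_, ?_⟩
  · intro i j
    simp only [hS]
    exact le_antisymm (hle i j) (hle j i)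
  · intro i
    simp only [hS]
    exact hRs m (hmem n) i
end

section
/- Let Φ = (φ_1,...,φ_M) be a finite family of vectors in a vector space V, and let k and L be nonnegative integers. Then the following are equivalent: (i) there exists a subset H of the index set with |H| = L such that the family indexed by the complement of H can be partitioned into k sets, each indexing a linearly independent subfamily; (ii) for every subset J of the index set, |J| − L ≤ k · dim span(φ_j : j ∈ J). -/
namespace RadoHorn

variable {K V : Type*} [Field K] [AddCommGroup V] [Module K V] {M k : ℕ}

/-- The colour class `i` of a partial colouring. -/
def cls (c : Fin M → Option (Fin k)) (i : Fin k) : Set (Fin M) := {x | c x = some i}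

/-- The uncovered indices of a partial colouring. -/
def unc (c : Fin M → Option (Fin k)) : Finset (Fin M) := Finset.univ.filter (fun x => c x = none)

/-- Every colour class is linearly independent. -/
def Good (K : Type*) {V : Type*} [Field K] [AddCommGroup V] [Module K V] {M k : ℕ}
    (φ : Fin M → V) (c : Fin M → Option (Fin k)) : Prop :=
  ∀ i, LinearIndepOn K φ (cls c i)

/-- Give `e` the colour `i` and uncolour `f`. -/
def swap (c : Fin M → Option (Fin k)) (e f : Fin M) (i : Fin k) : Fin M → Option (Fin k) :=
  fun x => if x = f then none else if x = e then some i else c x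

/-- A swap that keeps the colouring good. -/
def Step (K : Type*) {V : Type*} [Field K] [AddCommGroup V] [Module K V] {M k : ℕ}
    (φ : Fin M → V) (c c' : Fin M → Option (Fin k)) : Prop :=
  ∃ e f i, c e = none ∧ c f = some i ∧ c' = swap c e f i ∧ Good K φ c'

lemma unc_swap_card {c : Fin M → Option (Fin k)} {e f : Fin M} {i : Fin k}
    (he : c e = none) (hf : c f = some i) : (unc (swap c e f i)).card = (unc c).card := by
  have h : unc (swap c e f i) = insert f ((unc c).erase e) := by
    ext x
    simp only [unc, swap, Finset.mem_filter, Finset.mem_univ, true_and, Finset.mem_insert,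
      Finset.mem_erase]
    by_cases h1 : x = f <;> by_cases h2 : x = e <;> simp [h1, h2]
  have h1 : e ∈ unc c := by simp [unc, he]
  rw [h, Finset.card_insert_of_notMem (by simp [unc, hf]), Finset.card_erase_of_mem h1]
  have := Finset.card_pos.2 ⟨e, h1⟩
  omega

lemma cls_swap_self {c : Fin M → Option (Fin k)} {e f : Fin M} {i : Fin k}
    (he : c e = none) (hf : c f = some i) :
    cls (swap c e f i) i = insert e (cls c i \ {f}) := by
  ext x
  simp only [cls, swap, Set.mem_ofPred_eq, Set.mem_insert_iff, Set.mem_sdiff, Set.mem_singleton_iff]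
  by_cases h1 : x = f
  · have : f ≠ e := by rintro rfl; simp [he] at hf
    simp [h1, this]
  · by_cases h2 : x = e <;> simp [h1, h2]
    subst h2; simp [h1]

lemma cls_swap_ne {c : Fin M → Option (Fin k)} {e f : Fin M} {i j : Fin k}
    (he : c e = none) (hf : c f = some i) (hij : j ≠ i) :
    cls (swap c e f i) j = cls c j := by
  ext x
  simp only [cls, swap, Set.mem_ofPred_eq]
  by_cases h1 : x = f
  · simp [h1, hf, hij.symm]
  · by_cases h2 : x = e
    · simp [h1, h2, he, hij.symm]
    · simp [h1, h2]

/-- A minimal good colouring spans every uncovered vector in every class. -/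
lemma mem_span_of_min {φ : Fin M → V} {c : Fin M → Option (Fin k)} (hc : Good K φ c)
    (hmin : ∀ c' : Fin M → Option (Fin k), Good K φ c' → (unc c).card ≤ (unc c').card) {e : Fin M} (he : c e = none)
    (i : Fin k) : φ e ∈ Submodule.span K (φ '' cls c i) := by
  by_contra hcon
  have hg : Good K φ (Function.update c e (some i)) := by
    intro j
    by_cases hij : j = i
    · subst hij
      have : cls (Function.update c e (some j)) j = insert e (cls c j) := by
        ext x
        by_cases h : x = e <;> simp [cls, Function.update_apply, h]
      rw [this]
      exact (hc j).insert hcon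
    · have : cls (Function.update c e (some i)) j = cls c j := by
        ext x
        by_cases h : x = e
        · simp [cls, Function.update_apply, h, he, Ne.symm hij]
        · simp [cls, Function.update_apply, h]
      rw [this]
      exact hc j
  have h1 := hmin _ hg
  have h2 : unc (Function.update c e (some i)) = (unc c).erase e := by
    ext x
    by_cases h : x = e <;> simp [unc, Function.update_apply, h]
  have h3 : e ∈ unc c := by simp [unc, he]
  rw [h2] at h1
  have := Finset.card_erase_lt_of_mem h3
  omega

lemma good_swap {φ : Fin M → V} {c : Fin M → Option (Fin k)} (hc : Good K φ c) {e f : Fin M}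
    {i : Fin k} (he : c e = none) (hf : c f = some i)
    (h : φ e ∉ Submodule.span K (φ '' (cls c i \ {f}))) : Good K φ (swap c e f i) := by
  intro j
  by_cases hij : j = i
  · subst hij
    rw [cls_swap_self he hf]
    exact ((hc j).mono Set.sdiff_subset).insert h
  · rw [cls_swap_ne he hf hij]
    exact hc j

/-- Only the vectors that can be swapped out are needed to span. -/
lemma mem_span_inter {φ : Fin M → V} {s D : Set (Fin M)} (hs : LinearIndepOn K φ s) {v : V}
    (hv : v ∈ Submodule.span K (φ '' s))
    (hD : ∀ f ∈ s, f ∉ D → v ∈ Submodule.span K (φ '' (s \ {f}))) :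
    v ∈ Submodule.span K (φ '' (s ∩ D)) := by
  rw [Finsupp.mem_span_image_iff_linearCombination] at hv ⊢
  obtain ⟨l, hl, hlv⟩ := hv
  refine ⟨l, ?_, hlv⟩
  rw [Finsupp.mem_supported] at hl ⊢
  intro f hf
  refine ⟨hl hf, ?_⟩
  by_contra hfD
  have h := hD f (hl hf) hfD
  rw [Finsupp.mem_span_image_iff_linearCombination] at h
  obtain ⟨l', hl', hlv'⟩ := h
  rw [Finsupp.mem_supported] at hl'
  have heq : l = l' := by
    refine linearIndepOn_iffₛ.1 hs l ?_ l' ?_ (hlv.trans hlv'.symm)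
    exacts [hl, (hl'.trans Set.sdiff_subset)]
  subst heq
  exact (hl' hf).2 rfl

lemma exists_tight {φ : Fin M → V} : ∃ c : Fin M → Option (Fin k), Good K φ c ∧
    ∃ D : Finset (Fin M), unc c ⊆ D ∧
      ∀ i, ∀ x ∈ D, φ x ∈ Submodule.span K (φ '' (cls c i ∩ D)) := by
  classical
  obtain ⟨c, hc, hmin⟩ : ∃ c : Fin M → Option (Fin k), Good K φ c ∧
      ∀ c' : Fin M → Option (Fin k), Good K φ c' → (unc c).card ≤ (unc c').card := by
    have hne : (Finset.univ.filter (fun c : Fin M → Option (Fin k) => Good K φ c)).Nonempty := by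
      refine ⟨fun _ => none, ?_⟩
      simp only [Finset.mem_filter, Finset.mem_univ, true_and]
      intro i
      simp [cls]
    obtain ⟨c, hc, h⟩ := Finset.exists_min_image _ (fun c => (unc c).card) hne
    exact ⟨c, by simpa using hc, fun c' hc' => h c' (by simpa using hc')⟩
  let D : Finset (Fin M) :=
    Finset.univ.filter (fun x => ∃ b, Relation.ReflTransGen (Step K φ) c b ∧ b x = none)
  have hD : ∀ b, Relation.ReflTransGen (Step K φ) c b → ∀ x, b x = none → x ∈ D := by
    intro b hb x hx
    simp only [D, Finset.mem_filter, Finset.mem_univ, true_and]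
    exact ⟨b, hb, hx⟩
  have hreach : ∀ b, Relation.ReflTransGen (Step K φ) c b →
      Good K φ b ∧ (unc b).card = (unc c).card := by
    intro b hb
    induction hb with
    | refl => exact ⟨hc, rfl⟩
    | tail _ hs ih =>
      obtain ⟨e, f, i, he, hf, rfl, hg⟩ := hs
      exact ⟨hg, (unc_swap_card he hf).trans ih.2⟩
  have key : ∀ b, Relation.ReflTransGen (Step K φ) c b → ∀ i e, b e = none →
      φ e ∈ Submodule.span K (φ '' (cls b i ∩ D)) := by
    intro b hb i e he
    obtain ⟨hg, hcard⟩ := hreach b hb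
    refine mem_span_inter (hg i)
      (mem_span_of_min hg (fun c' hc' => hcard ▸ hmin c' hc') he i) ?_
    intro f hf hfD
    by_contra hcon
    have hf' : b f = some i := hf
    apply hfD
    refine hD (swap b e f i) (hb.tail ⟨e, f, i, he, hf', rfl, good_swap hg he hf' hcon⟩) f ?_
    simp [swap]
  have hspan : ∀ b, Relation.ReflTransGen (Step K φ) c b → ∀ j,
      Submodule.span K (φ '' (cls b j ∩ D)) ≤ Submodule.span K (φ '' (cls c j ∩ D)) := by
    intro b hb
    induction hb with
    | refl => exact fun j => le_rfl
    | @tail b b' hb hs ih =>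
      intro j
      refine le_trans ?_ (ih j)
      obtain ⟨e, f, i, he, hf, rfl, hg⟩ := hs
      by_cases hij : j = i
      · subst hij
        rw [cls_swap_self he hf, Submodule.span_le]
        rintro _ ⟨x, ⟨hx, hxD⟩, rfl⟩
        rcases hx with rfl | hx
        · exact key b hb j x he
        · exact Submodule.subset_span ⟨x, ⟨hx.1, hxD⟩, rfl⟩
      · rw [cls_swap_ne he hf hij]
  refine ⟨c, hc, D, ?_, ?_⟩
  · intro x hx
    exact hD c .refl x (by simpa [unc] using hx)
  · intro i x hx
    simp only [D, Finset.mem_filter, Finset.mem_univ, true_and] at hx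
    obtain ⟨b, hb, hbx⟩ := hx
    exact hspan b hb i (key b hb i x hbx)

end RadoHorn


/-- **Generalized Rado–Horn theorem.**  For a finite family `φ : Fin M → V` and
`k, L ∈ ℕ` with `L ≤ M`, the following are equivalent: (i) there is a subset
`H` of the index set with `|H| = L` such that the subfamily indexed by the
complement of `H` can be partitioned into `k` linearly independent sets;
(ii) every subset `J` of the index set satisfies
`|J| − L ≤ k · dim span (φ j : j ∈ J)`. -/
theorem generalized_rado_horn {K V : Type*} [Field K] [AddCommGroup V] [Module K V]
    {M : ℕ} (k L : ℕ) (hL : L ≤ M) (φ : Fin M → V) :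
    (∃ H : Finset (Fin M), H.card = L ∧
        ∃ A : Fin k → Finset (Fin M),
          (∀ i j, i ≠ j → Disjoint (A i) (A j)) ∧
          (Finset.univ.biUnion A = Hᶜ) ∧
          (∀ i, LinearIndependent K (fun x : {y : Fin M // y ∈ A i} => φ x.1))) ↔
      (∀ J : Finset (Fin M),
        (J.card : ℤ) - L ≤ k * Module.finrank K (Submodule.span K (φ '' ↑J))) := by
  classical
  constructor
  · rintro ⟨H, hH, A, hdis, hun, hind⟩ J
    have hcov : J ⊆ H ∪ Finset.univ.biUnion (fun i => A i ∩ J) := by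
      intro x hx
      by_cases hxH : x ∈ H
      · exact Finset.mem_union_left _ hxH
      · have : x ∈ Finset.univ.biUnion A := by rw [hun]; simpa using hxH
        simp only [Finset.mem_biUnion, Finset.mem_univ, true_and] at this
        obtain ⟨i, hi⟩ := this
        refine Finset.mem_union_right _ ?_
        simp only [Finset.mem_biUnion, Finset.mem_univ, true_and, Finset.mem_inter]
        exact ⟨i, hi, hx⟩
    have hfin : FiniteDimensional K (Submodule.span K (φ '' (J : Set (Fin M)))) :=
      FiniteDimensional.span_of_finite K ((Finset.finite_toSet J).image φ)
    have hcls : ∀ i ∈ (Finset.univ : Finset (Fin k)), (A i ∩ J).card ≤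
        Module.finrank K (Submodule.span K (φ '' (J : Set (Fin M)))) := by
      intro i _
      have h0 : LinearIndepOn K φ (A i : Set (Fin M)) := hind i
      have h1 : LinearIndepOn K φ ((A i ∩ J : Finset (Fin M)) : Set (Fin M)) :=
        h0.mono (by simp)
      have h2 : LinearIndependent K (fun x : {y // y ∈ A i ∩ J} => φ x.1) := h1
      have h3 := finrank_span_eq_card h2
      have h4 : Set.range (fun x : {y // y ∈ A i ∩ J} => φ x.1) ⊆ φ '' (J : Set (Fin M)) := by
        rintro _ ⟨x, rfl⟩
        exact ⟨x.1, (Finset.mem_inter.1 x.2).2, rfl⟩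
      have h5 := Submodule.finrank_mono (Submodule.span_mono (R := K) h4)
      rw [h3, Fintype.card_coe] at h5
      exact h5
    have h1 := Finset.card_le_card hcov
    have h2 := Finset.card_union_le H (Finset.univ.biUnion (fun i => A i ∩ J))
    have h3 := Finset.card_biUnion_le (s := Finset.univ) (t := fun i => A i ∩ J)
    have h4 := Finset.sum_le_card_nsmul _ _ _ hcls
    simp only [Finset.card_univ, Fintype.card_fin, smul_eq_mul] at h4
    zify at h1 h2 h3 h4 hH
    linarith
  · intro h
    obtain ⟨c, hc, D, huD, hD⟩ := RadoHorn.exists_tight (K := K) (k := k) (φ := φ)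
    have hrank : ∀ i ∈ (Finset.univ : Finset (Fin k)),
        Module.finrank K (Submodule.span K (φ '' (D : Set (Fin M)))) ≤
          (D.filter (fun x => c x = some i)).card := by
      intro i _
      have h1 : Submodule.span K (φ '' (D : Set (Fin M))) ≤
          Submodule.span K (((D.filter (fun x => c x = some i)).image φ : Finset V) : Set V) := by
        rw [Submodule.span_le]
        rintro _ ⟨x, hx, rfl⟩
        refine Submodule.span_mono ?_ (hD i x hx)
        rintro _ ⟨y, ⟨hy, hyD⟩, rfl⟩
        have hy' : c y = some i := hy
        simp only [Finset.coe_image, Finset.coe_filter]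
        exact ⟨y, ⟨hyD, hy'⟩, rfl⟩
      exact (Submodule.finrank_mono h1).trans
        ((finrank_span_finset_le_card _).trans Finset.card_image_le)
    have hsum := Finset.card_nsmul_le_sum _ _ _ hrank
    simp only [Finset.card_univ, Fintype.card_fin, smul_eq_mul] at hsum
    have hcard : D.card = (RadoHorn.unc c).card +
        ∑ i : Fin k, (D.filter (fun x => c x = some i)).card := by
      rw [Finset.card_eq_sum_card_fiberwise (f := c) (t := Finset.univ) (by simp),
        Fintype.sum_option]
      congr 2
      ext x
      simp only [Finset.mem_filter, RadoHorn.unc, Finset.mem_univ, true_and]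
      exact ⟨fun hx => hx.2, fun hx => ⟨huD (by simpa [RadoHorn.unc] using hx), hx⟩⟩
    have hJ := h D
    have hle : (RadoHorn.unc c).card ≤ L := by
      zify at hsum hcard ⊢
      linarith
    obtain ⟨H, hH, hHc⟩ := Finset.exists_superset_card_eq hle (by simpa using hL)
    refine ⟨H, hHc, fun i => Hᶜ.filter (fun x => c x = some i), ?_, ?_, ?_⟩
    · intro i j hij
      rw [Finset.disjoint_left]
      intro x hx hx'
      simp only [Finset.mem_filter] at hx hx'
      exact hij (Option.some.inj (hx.2.symm.trans hx'.2))
    · ext x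
      simp only [Finset.mem_biUnion, Finset.mem_univ, true_and, Finset.mem_filter]
      refine ⟨fun ⟨i, hi⟩ => hi.1, fun hx => ?_⟩
      cases hcx : c x with
      | none =>
        exact absurd (hH (by simp [RadoHorn.unc, hcx])) (Finset.mem_compl.1 hx)
      | some i => exact ⟨i, hx, rfl⟩
    · intro i
      have h1 : LinearIndepOn K φ
          ((Hᶜ.filter (fun x => c x = some i) : Finset (Fin M)) : Set (Fin M)) :=
        (hc i).mono (fun x hx => (Finset.mem_filter.1 hx).2)
      exact h1
end
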